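/- Let K be a field and let C⁰, C¹, C² be finite-dimensional K-vector spaces with linear maps d₀ : C⁰ → C¹ and d₁ : C¹ → C² satisfying d₁ ∘ d₀ = 0. Let (φ₀, φ₁, φ₂) and (ψ₀, ψ₁, ψ₂) be two cochain endomorphisms of this complex (i.e. each commutes with d₀ and d₁ as above), and suppose they are chain homotopic: there exist linear maps h₁ : C¹ → C⁰ and h₂ : C² → C¹ with ψ₀ − φ₀ = h₁ ∘ d₀, ψ₁ − φ₁ = d₀ ∘ h₁ + h₂ ∘ d₁, and ψ₂ − φ₂ = d₁ ∘ h₂. Then det(φ₀) · det(φ₂) · det(ψ₁) = det(ψ₀) · det(ψ₂) · det(φ₁). -/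

import Mathlib

theorem range_inv {K V W : Type*} [Field K] [AddCommGroup V] [Module K V]
    [AddCommGroup W] [Module K W] (f : V →ₗ[K] W) (φ : V →ₗ[K] V) (ξ : W →ₗ[K] W)
    (h : f ∘ₗ φ = ξ ∘ₗ f) : LinearMap.range f ≤ (LinearMap.range f).comap ξ := by
  rintro _ ⟨x, rfl⟩
  exact ⟨φ x, LinearMap.congr_fun h x⟩

theorem ker_inv {K V W : Type*} [Field K] [AddCommGroup V] [Module K V]
    [AddCommGroup W] [Module K W] (f : V →ₗ[K] W) (φ : V →ₗ[K] V) (ξ : W →ₗ[K] W)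
    (h : f ∘ₗ φ = ξ ∘ₗ f) : LinearMap.ker f ≤ (LinearMap.ker f).comap φ := by
  intro x hx
  have h2 : f (φ x) = ξ (f x) := LinearMap.congr_fun h x
  have hx' : f x = 0 := hx
  change f (φ x) = 0
  rw [h2, hx', map_zero]

theorem det_ker_range {K V W : Type*} [Field K] [AddCommGroup V] [Module K V]
    [FiniteDimensional K V]
    [AddCommGroup W] [Module K W] (f : V →ₗ[K] W) (φ : V →ₗ[K] V) (ξ : W →ₗ[K] W)
    (h : f ∘ₗ φ = ξ ∘ₗ f) :
    LinearMap.det φ = LinearMap.det (φ.restrict (ker_inv f φ ξ h)) *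
      LinearMap.det (ξ.restrict (range_inv f φ ξ h)) := by
  rw [LinearMap.det_eq_det_mul_det (LinearMap.ker f) φ (ker_inv f φ ξ h)]
  congr 1
  rw [← LinearMap.det_conj _ f.quotKerEquivRange]
  congr 1
  apply LinearMap.ext
  rintro ⟨_, x, rfl⟩
  apply Subtype.ext
  have e : f.quotKerEquivRange.symm ⟨f x, x, rfl⟩ = Submodule.Quotient.mk x := by
    rw [LinearEquiv.symm_apply_eq]; rfl
  simp only [LinearMap.comp_apply, LinearEquiv.coe_coe]
  rw [e]
  exact LinearMap.congr_fun h x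


/-- Chain-homotopic cochain endomorphisms `(φ₀, φ₁, φ₂)` and `(ψ₀, ψ₁, ψ₂)` of a
three-term complex `0 → C⁰ → C¹ → C² → 0` of finite-dimensional vector spaces
have equal alternating products of determinants:
`det(φ₀)·det(φ₂)·det(ψ₁) = det(ψ₀)·det(ψ₂)·det(φ₁)`. -/
theorem stmt13 (K : Type*) [Field K] (C0 C1 C2 : Type*)
    [AddCommGroup C0] [Module K C0] [FiniteDimensional K C0]
    [AddCommGroup C1] [Module K C1] [FiniteDimensional K C1]
    [AddCommGroup C2] [Module K C2] [FiniteDimensional K C2]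
    (d0 : C0 →ₗ[K] C1) (d1 : C1 →ₗ[K] C2) (hd : d1 ∘ₗ d0 = 0)
    (φ0 : C0 →ₗ[K] C0) (φ1 : C1 →ₗ[K] C1) (φ2 : C2 →ₗ[K] C2)
    (hφ0 : d0 ∘ₗ φ0 = φ1 ∘ₗ d0) (hφ1 : d1 ∘ₗ φ1 = φ2 ∘ₗ d1)
    (ψ0 : C0 →ₗ[K] C0) (ψ1 : C1 →ₗ[K] C1) (ψ2 : C2 →ₗ[K] C2)
    (hψ0 : d0 ∘ₗ ψ0 = ψ1 ∘ₗ d0) (hψ1 : d1 ∘ₗ ψ1 = ψ2 ∘ₗ d1)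
    (h1 : C1 →ₗ[K] C0) (h2 : C2 →ₗ[K] C1)
    (hh0 : ψ0 - φ0 = h1 ∘ₗ d0)
    (hh1 : ψ1 - φ1 = d0 ∘ₗ h1 + h2 ∘ₗ d1)
    (hh2 : ψ2 - φ2 = d1 ∘ₗ h2) :
    LinearMap.det φ0 * LinearMap.det φ2 * LinearMap.det ψ1 =
      LinearMap.det ψ0 * LinearMap.det ψ2 * LinearMap.det φ1 := by
  have hψ0' : ∀ x, ψ0 x = φ0 x + h1 (d0 x) := fun x => by
    have := LinearMap.congr_fun hh0 x
    simp only [LinearMap.sub_apply, LinearMap.comp_apply] at this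
    rw [← this]; abel
  have hψ1' : ∀ x, ψ1 x = φ1 x + (d0 (h1 x) + h2 (d1 x)) := fun x => by
    have := LinearMap.congr_fun hh1 x
    simp only [LinearMap.sub_apply, LinearMap.comp_apply, LinearMap.add_apply] at this
    rw [← this]; abel
  have hψ2' : ∀ x, ψ2 x = φ2 x + d1 (h2 x) := fun x => by
    have := LinearMap.congr_fun hh2 x
    simp only [LinearMap.sub_apply, LinearMap.comp_apply] at this
    rw [← this]; abel
  have hle : LinearMap.range d0 ≤ LinearMap.ker d1 := by
    rintro _ ⟨x, rfl⟩
    exact LinearMap.congr_fun hd x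
  let D : (C1 ⧸ LinearMap.range d0) →ₗ[K] C2 := (LinearMap.range d0).liftQ d1 hle
  let qφ := (LinearMap.range d0).mapQ (LinearMap.range d0) φ1 (range_inv d0 φ0 φ1 hφ0)
  let qψ := (LinearMap.range d0).mapQ (LinearMap.range d0) ψ1 (range_inv d0 ψ0 ψ1 hψ0)
  have cφ : D ∘ₗ qφ = φ2 ∘ₗ D := by
    apply Submodule.linearMap_qext
    exact hφ1
  have cψ : D ∘ₗ qψ = ψ2 ∘ₗ D := by
    apply Submodule.linearMap_qext
    exact hψ1
  have e0 : φ0.restrict (p := LinearMap.ker d0) (q := LinearMap.ker d0) (ker_inv d0 φ0 φ1 hφ0) = ψ0.restrict (p := LinearMap.ker d0) (q := LinearMap.ker d0) (ker_inv d0 ψ0 ψ1 hψ0) := by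
    apply LinearMap.ext
    rintro ⟨x, hx⟩
    apply Subtype.ext
    have hx' : d0 x = 0 := hx
    change φ0 x = ψ0 x
    rw [hψ0', hx', map_zero, add_zero]
  have e1 : qφ.restrict (p := LinearMap.ker D) (q := LinearMap.ker D) (ker_inv D qφ φ2 cφ) = qψ.restrict (p := LinearMap.ker D) (q := LinearMap.ker D) (ker_inv D qψ ψ2 cψ) := by
    apply LinearMap.ext
    rintro ⟨x, hx⟩
    apply Subtype.ext
    obtain ⟨x, rfl⟩ := Submodule.Quotient.mk_surjective _ x
    have hx' : d1 x = 0 := hx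
    change (Submodule.Quotient.mk (φ1 x) : C1 ⧸ LinearMap.range d0)
      = Submodule.Quotient.mk (ψ1 x)
    rw [eq_comm, Submodule.Quotient.eq, hψ1', hx', map_zero, add_zero, add_sub_cancel_left]
    exact ⟨_, rfl⟩
  have e2 : (LinearMap.range D).mapQ (LinearMap.range D) φ2 (range_inv D qφ φ2 cφ)
      = (LinearMap.range D).mapQ (LinearMap.range D) ψ2 (range_inv D qψ ψ2 cψ) := by
    apply Submodule.linearMap_qext
    apply LinearMap.ext
    intro x
    change (Submodule.Quotient.mk (φ2 x) : C2 ⧸ LinearMap.range D)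
      = Submodule.Quotient.mk (ψ2 x)
    rw [eq_comm, Submodule.Quotient.eq, hψ2', add_sub_cancel_left]
    exact ⟨Submodule.Quotient.mk (h2 x), rfl⟩
  rw [det_ker_range d0 φ0 φ1 hφ0, det_ker_range d0 ψ0 ψ1 hψ0,
    LinearMap.det_eq_det_mul_det (LinearMap.range d0) φ1 (range_inv d0 φ0 φ1 hφ0),
    LinearMap.det_eq_det_mul_det (LinearMap.range d0) ψ1 (range_inv d0 ψ0 ψ1 hψ0),
    LinearMap.det_eq_det_mul_det (LinearMap.range D) φ2 (range_inv D qφ φ2 cφ),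
    LinearMap.det_eq_det_mul_det (LinearMap.range D) ψ2 (range_inv D qψ ψ2 cψ),
    det_ker_range D qφ φ2 cφ, det_ker_range D qψ ψ2 cψ, e0, e1, e2]
  ring
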